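/- Let d ∈ ℕ and let (X_i)_{i∈ℕ} be a strictly stationary sequence of S_d-valued random vectors satisfying assumption (A2): for some p ∈ (2,∞), sup_{i≠j} (∫_{S_d×S_d} |h_{i,j}(x,x′)|^p dx dx′)^{1/p} < ∞, where h_{i,j} = f_{X_i,X_j} − f_{X_i} f_{X_j}. Let q ∈ (1,2) satisfy 1/p + 1/q = 1, let s ∈ Int(S_d), let b = b(n) → 0, and let (β_n) be integers with 1 ≤ β_n ≤ n−1. Then the near-diagonal covariance sum C_{1,n} = Σ_{1 ≤ |i−j| ≤ β_n, 1 ≤ i,j ≤ n} Cov(κ_{s,b}(X_i), κ_{s,b}(X_j)) satisfies |C_{1,n}| ≪_s n β_n b^{−d/p} as n → ∞. -/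

import Mathlib

open MeasureTheory Filter Asymptotics Real Topology

noncomputable section

/-- The `d`-dimensional simplex `S_d = {s ∈ [0,1]^d : ‖s‖₁ ≤ 1}`. -/
def Sd (d : ℕ) : Set (Fin d → ℝ) :=
  {s | (∀ i, s i ∈ Set.Icc (0 : ℝ) 1) ∧ ∑ i, |s i| ≤ 1}

/-- The interior of the simplex, `Int(S_d) = {s ∈ (0,1)^d : ‖s‖₁ < 1}`. -/
def SdInt (d : ℕ) : Set (Fin d → ℝ) :=
  {s | (∀ i, s i ∈ Set.Ioo (0 : ℝ) 1) ∧ ∑ i, |s i| < 1}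

/-- The Dirichlet(u, v) density on the simplex, evaluated at `x`. -/
def dirK (d : ℕ) (u : Fin d → ℝ) (v : ℝ) (x : Fin d → ℝ) : ℝ :=
  (Real.Gamma (∑ i, u i + v) / (Real.Gamma v * ∏ i, Real.Gamma (u i))) *
    (1 - ∑ i, x i) ^ (v - 1) * ∏ i, (x i) ^ (u i - 1)

/-- The Dirichlet kernel `κ_{s,b} = K_{s/b+1, (1-‖s‖₁)/b+1}`. -/
def kappa (d : ℕ) (s : Fin d → ℝ) (b : ℝ) (x : Fin d → ℝ) : ℝ :=
  dirK d (fun i => s i / b + 1) ((1 - ∑ i, s i) / b + 1) x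

/-- `ψ(s) = (4π)^{-d/2} / ((1-‖s‖₁)^{1/2} ∏ s_i^{1/2})`. -/
def psiFun (d : ℕ) (s : Fin d → ℝ) : ℝ :=
  (4 * π) ^ (-(d : ℝ) / 2) /
    ((1 - ∑ i, s i) ^ ((1 : ℝ) / 2) * ∏ i, (s i) ^ ((1 : ℝ) / 2))

/-- The Dirichlet kernel density estimator `f̂_{n,b}(s)`. -/
def fhat {Ω : Type*} (d n : ℕ) (b : ℝ) (X : ℕ → Ω → (Fin d → ℝ))
    (s : Fin d → ℝ) (ω : Ω) : ℝ :=
  (n : ℝ)⁻¹ * ∑ i ∈ Finset.Icc 1 n, kappa d s b (X i ω)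

/-- The strong mixing (α-mixing) coefficient of the sequence `X`. -/
def alphaMix {Ω : Type*} [MeasurableSpace Ω] (P : Measure Ω)
    {d : ℕ} (X : ℕ → Ω → (Fin d → ℝ)) (m : ℕ) : ℝ :=
  sSup {r : ℝ | ∃ k : ℕ, 1 ≤ k ∧ ∃ A B : Set Ω,
    MeasurableSet[⨆ i ∈ Set.Icc 1 k, MeasurableSpace.comap (X i) inferInstance] A ∧
    MeasurableSet[⨆ i ∈ Set.Ici (k + m), MeasurableSpace.comap (X i) inferInstance] B ∧
    r = |(P (A ∩ B)).toReal - (P A).toReal * (P B).toReal|}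

/-- Strict stationarity of the sequence `X` (indexed from 1). -/
def IsStrictlyStationary {Ω : Type*} [MeasurableSpace Ω] (P : Measure Ω)
    {d : ℕ} (X : ℕ → Ω → (Fin d → ℝ)) : Prop :=
  ∀ k n : ℕ,
    Measure.map (fun ω => fun t : Fin n => X (t.1 + 1 + k) ω) P =
      Measure.map (fun ω => fun t : Fin n => X (t.1 + 1) ω) P

/-- Covariance of two real random variables. -/
def cov {Ω : Type*} [MeasurableSpace Ω] (P : Measure Ω) (Y Z : Ω → ℝ) : ℝ :=
  ∫ ω, Y ω * Z ω ∂P - (∫ ω, Y ω ∂P) * (∫ ω, Z ω ∂P)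

/-- The bias functional `g(s)` from Theorem MSE. -/
def gfun (d : ℕ) (f : (Fin d → ℝ) → ℝ) (s : Fin d → ℝ) : ℝ :=
  (∑ i, (1 - ((d : ℝ) + 1) * s i) * fderiv ℝ f s (Pi.single i 1)) +
    (1 / 2) * ∑ i, ∑ j, s i * ((if i = j then (1 : ℝ) else 0) - s j) *
      fderiv ℝ (fun t => fderiv ℝ f t (Pi.single i 1)) s (Pi.single j 1)

/-- The centered kernel variable `Ξ_{i,n}(s)`. -/
def Xi {Ω : Type*} [MeasurableSpace Ω] (P : Measure Ω) {d : ℕ}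
    (X : ℕ → Ω → (Fin d → ℝ)) (s : Fin d → ℝ) (b : ℝ) (i : ℕ) (ω : Ω) : ℝ :=
  kappa d s b (X i ω) - ∫ ω', kappa d s b (X i ω') ∂P

/-- The `j`-th big block of indices `I_j`. -/
def bigBlock (pn qn j : ℕ) : Finset ℕ :=
  Finset.Icc ((j - 1) * (pn + qn) + 1) ((j - 1) * (pn + qn) + pn)

/-- The `j`-th small block of indices `J_j`. -/
def smallBlock (pn qn j : ℕ) : Finset ℕ :=
  Finset.Icc ((j - 1) * (pn + qn) + pn + 1) (j * (pn + qn))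

/-- Assumption (A2): pairwise joint densities exist and the local dependence
functions `h_{i,j} = f_{X_i,X_j} - f_{X_i} f_{X_j}` have uniformly bounded `L^p` norms. -/
def AssumpA2 {Ω : Type*} [MeasurableSpace Ω] (P : Measure Ω) {d : ℕ}
    (X : ℕ → Ω → (Fin d → ℝ)) (f : (Fin d → ℝ) → ℝ) (p : ℝ) : Prop :=
  ∃ fpair : ℕ → ℕ → ((Fin d → ℝ) × (Fin d → ℝ)) → ℝ,
    (∀ i j : ℕ, 1 ≤ i → 1 ≤ j → i ≠ j →
      Measure.map (fun ω => (X i ω, X j ω)) P =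
        volume.withDensity (fun z => ENNReal.ofReal (fpair i j z))) ∧
    (∀ i j : ℕ, 1 ≤ i → 1 ≤ j → i ≠ j →
      Integrable (fun z => |fpair i j z - f z.1 * f z.2| ^ p)
        (volume.restrict (Sd d ×ˢ Sd d))) ∧
    ∃ C : ℝ, ∀ i j : ℕ, 1 ≤ i → 1 ≤ j → i ≠ j →
      (∫ z in Sd d ×ˢ Sd d, |fpair i j z - f z.1 * f z.2| ^ p) ^ (1 / p) ≤ C

/-- Stirling ratio `R(z) = √(2π) e^{-z} z^{z+1/2} / Γ(z+1)`. -/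
def Rfun (z : ℝ) : ℝ :=
  Real.sqrt (2 * π) * Real.exp (-z) * z ^ (z + 1 / 2) / Real.Gamma (z + 1)

end
lemma aux_logGamma_stirling : ∃ D : ℝ, 0 ≤ D ∧ ∀ z : ℝ, 1 ≤ z →
    |Real.log (Real.Gamma (z + 1)) - ((z + 1 / 2) * Real.log z - z)| ≤ D := by
  have hupper : ∀ n : ℕ, Real.log (Stirling.stirlingSeq (n + 1)) ≤ Real.log (Stirling.stirlingSeq 1) :=
    fun n => Stirling.log_stirlingSeq'_antitone (Nat.zero_le n)
  have hlower := Stirling.log_stirlingSeq_bounded_by_constant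
  set A := Real.log (Stirling.stirlingSeq 1) with hA
  set B : ℝ := 1 - 12⁻¹ - Real.log 2 / 2 with hB
  refine ⟨|A| + |B| + Real.log 2 + 2, by have := Real.log_nonneg (show (1:ℝ) ≤ 2 by norm_num); positivity, fun z hz => ?_⟩
  obtain ⟨m, hm⟩ : ∃ m : ℕ, ⌊z⌋₊ = m + 1 := ⟨⌊z⌋₊ - 1, by have := Nat.one_le_floor_iff z |>.2 hz; omega⟩
  set n : ℕ := m + 1 with hn
  have hn1 : (1 : ℝ) ≤ n := by rw [hn]; push_cast; linarith [Nat.cast_nonneg (α := ℝ) m]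
  have hnz : (n : ℝ) ≤ z := hm ▸ Nat.floor_le (by linarith)
  have hzn : z < n + 1 := hm ▸ Nat.lt_floor_add_one z
  obtain ⟨t, ht⟩ : ∃ t, t = z - n := ⟨_, rfl⟩
  have ht0 : 0 ≤ t := by linarith
  have ht1 : t ≤ 1 := by linarith
  have hzt : z = n + t := by linarith
  have hfe : ∀ {y : ℝ}, 0 < y → (Real.log ∘ Real.Gamma) (y + 1) = (Real.log ∘ Real.Gamma) y + Real.log y := by
    intro y hy
    simp only [Function.comp]
    rw [Real.Gamma_add_one hy.ne', Real.log_mul hy.ne' (Real.Gamma_pos_of_pos hy).ne', add_comm]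
  have hfac : Real.log (Real.Gamma ((n : ℝ) + 1)) = Real.log (n.factorial) := by
    rw [Real.Gamma_nat_eq_factorial]
  have h1 : Real.log (Real.Gamma (z + 1)) ≤ Real.log n.factorial + t * Real.log (n + 1) := by
    rcases ht0.eq_or_lt with h | h
    · rw [hzt, ← h, ← hfac]; simp
    · have := Real.BohrMollerup.f_add_nat_le Real.convexOn_log_Gamma hfe (n := n + 1) (by omega) h ht1
      simp only [Function.comp] at this
      push_cast at this
      rw [hfac] at this
      rw [hzt, show (n : ℝ) + t + 1 = n + 1 + t by ring]; exact this
  have h2 : Real.log n.factorial + t * Real.log n ≤ Real.log (Real.Gamma (z + 1)) := by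
    rcases ht0.eq_or_lt with h | h
    · rw [hzt, ← h, ← hfac]; simp
    · have := Real.BohrMollerup.f_add_nat_ge Real.convexOn_log_Gamma hfe (n := n + 1) (by omega) h
      simp only [Function.comp] at this
      push_cast at this
      rw [hfac, add_sub_cancel_right] at this
      rw [hzt, show (n : ℝ) + t + 1 = n + 1 + t by ring]; exact this
  have hform := Stirling.log_stirlingSeq_formula n
  have hU := hupper m
  have hL := hlower m
  rw [← hn] at hU hL
  have hl2 : Real.log (2 * n) = Real.log 2 + Real.log n := Real.log_mul (by norm_num) (by linarith)
  have hl3 : Real.log (n / Real.exp 1) = Real.log n - 1 := by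
    rw [Real.log_div (by linarith) (Real.exp_pos 1).ne', Real.log_exp]
  rw [hl2, hl3] at hform
  have hl20 : 0 ≤ Real.log 2 := Real.log_nonneg (by norm_num)
  have hlz1 : Real.log n ≤ Real.log z := Real.log_le_log (by linarith) hnz
  have hlz2 : Real.log z ≤ Real.log n + t / n := by
    have : Real.log (z / n) ≤ z / n - 1 := Real.log_le_sub_one_of_pos (by positivity)
    rw [Real.log_div (by linarith) (by linarith)] at this
    have h : z / n - 1 = t / n := by rw [hzt]; field_simp; ring
    linarith
  have hln1 : Real.log (n + 1) ≤ Real.log n + 1 / n := by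
    have : Real.log ((n + 1) / n) ≤ (n + 1) / n - 1 := Real.log_le_sub_one_of_pos (by positivity)
    rw [Real.log_div (by linarith) (by linarith)] at this
    have h : ((n:ℝ) + 1) / n - 1 = 1 / n := by field_simp; ring
    linarith
  have hi : 1 / (n : ℝ) ≤ 1 := by rw [div_le_one (by linarith)]; exact hn1
  have e1 : t * Real.log (n + 1) ≤ t * Real.log n + 1 := by nlinarith
  have e2 : (z + 1 / 2) * Real.log n ≤ (z + 1 / 2) * Real.log z := by
    apply mul_le_mul_of_nonneg_left hlz1; linarith
  have e3 : (z + 1 / 2) * Real.log z ≤ (z + 1 / 2) * Real.log n + t + 3 / 2 := by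
    have : (z + 1 / 2) * Real.log z ≤ (z + 1 / 2) * (Real.log n + t / n) := by
      apply mul_le_mul_of_nonneg_left hlz2; linarith
    have h : (z + 1 / 2) * (t / n) ≤ t + 3 / 2 := by
      rw [hzt, mul_div_assoc', div_le_iff₀ (by linarith)]
      nlinarith
    linarith
  have e4 : (z + 1 / 2) * Real.log n = (n + 1/2) * Real.log n + t * Real.log n := by rw [hzt]; ring
  have a1 := le_abs_self A
  have a2 := neg_abs_le A
  have a3 := le_abs_self B
  have a4 := neg_abs_le B
  rw [abs_le]
  constructor <;> linarith

lemma aux_pt_log {x s : ℝ} (hx0 : 0 < x) (hx1 : x ≤ 1) (hs0 : 0 < s) (hs1 : s ≤ 1) :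
    s * Real.log x ≤ s * Real.log s + (x - s) - (x - s) ^ 2 / 4 := by
  obtain ⟨u, hu0, rfl⟩ : ∃ u, 0 < u ∧ u ^ 2 = x := ⟨√x, by positivity, Real.sq_sqrt hx0.le⟩
  obtain ⟨w, hw0, rfl⟩ : ∃ u, 0 < u ∧ u ^ 2 = s := ⟨√s, by positivity, Real.sq_sqrt hs0.le⟩
  have hu1 : u ≤ 1 := by nlinarith
  have hw1 : w ≤ 1 := by nlinarith
  have h : Real.log (u / w) ≤ u / w - 1 := Real.log_le_sub_one_of_pos (by positivity)
  rw [Real.log_div hu0.ne' hw0.ne'] at h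
  have h2 : w ^ 2 * (Real.log u - Real.log w) ≤ w * u - w ^ 2 := by
    calc _ ≤ w ^ 2 * (u / w - 1) := by gcongr
      _ = _ := by field_simp
  rw [Real.log_pow, Real.log_pow]
  have h3 : (u ^ 2 - w ^ 2) ^ 2 / 4 ≤ (u - w) ^ 2 := by
    have : (u + w) ^ 2 ≤ 4 := by nlinarith
    nlinarith [mul_le_mul_of_nonneg_left this (sq_nonneg (u - w))]
  push_cast
  nlinarith

lemma aux_pt {x s b : ℝ} (hb : 0 < b) (hx0 : 0 ≤ x) (hx1 : x ≤ 1) (hs0 : 0 < s) (hs1 : s ≤ 1) :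
    x ^ (s / b) ≤ Real.exp ((s * Real.log s + (x - s) - (x - s) ^ 2 / 4) / b) := by
  rcases hx0.eq_or_lt with h | h
  · rw [← h, Real.zero_rpow (by positivity)]; positivity
  · rw [Real.rpow_def_of_pos h]
    apply Real.exp_le_exp.2
    rw [mul_div_assoc', div_le_div_iff_of_pos_right hb, mul_comm]
    exact aux_pt_log h hx1 hs0 hs1

lemma aux_Gamma_shift (d : ℕ) (N : ℝ) (hN : 1 ≤ N) :
    Real.log (Real.Gamma (N + d + 1)) ≤ Real.log (Real.Gamma (N + 1)) + d * Real.log N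
      + d * Real.log (d + 1) := by
  have key : ∀ k : ℕ, k ≤ d → Real.log (Real.Gamma (N + k + 1)) ≤ Real.log (Real.Gamma (N + 1))
      + k * Real.log N + k * Real.log (d + 1) := by
    intro k
    induction k with
    | zero => intro _; simp
    | succ k ih =>
      intro hk
      have := ih (by omega)
      have hp : 0 < N + k + 1 := by positivity
      push_cast
      rw [show N + ((k : ℝ) + 1) + 1 = (N + k + 1) + 1 by ring, Real.Gamma_add_one hp.ne',
        Real.log_mul hp.ne' (Real.Gamma_pos_of_pos hp).ne']
      have hl : Real.log (N + k + 1) ≤ Real.log N + Real.log (d + 1) := by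
        rw [← Real.log_mul (by positivity) (by positivity)]
        apply Real.log_le_log hp
        have : (k : ℝ) + 1 ≤ d := by exact_mod_cast hk
        nlinarith
      linarith
  exact key d le_rfl

lemma aux_const (d : ℕ) (s : Fin d → ℝ) (hs : ∀ i, 0 < s i) (s0 : ℝ) (hs0 : 0 < s0)
    (hsum : s0 + ∑ i, s i = 1) : ∃ C : ℝ, ∀ N : ℝ, 1 ≤ N → 1 ≤ s0 * N → (∀ i, 1 ≤ s i * N) →
    Real.log (Real.Gamma (N + d + 1)) - Real.log (Real.Gamma (s0 * N + 1))
      - ∑ i, Real.log (Real.Gamma (s i * N + 1)) + s0 * N * Real.log s0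
      + ∑ i, s i * N * Real.log (s i) ≤ C + d / 2 * Real.log N := by
  obtain ⟨D, hD0, hD⟩ := aux_logGamma_stirling
  refine ⟨D + d * Real.log (d + 1) + (D - Real.log s0 / 2) + ∑ i, (D - Real.log (s i) / 2), ?_⟩
  intro N hN h0 hi
  have hNp : 0 < N := by linarith
  have t1 := aux_Gamma_shift d N hN
  have t2 := (abs_le.1 (hD N hN)).2
  have one : ∀ r : ℝ, 0 < r → 1 ≤ r * N → r * N * Real.log r - Real.log (Real.Gamma (r * N + 1)) ≤
      (D - Real.log r / 2) - 1/2 * Real.log N - r * (N * Real.log N - N) := by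
    intro r hr hrN
    have := (abs_le.1 (hD (r * N) hrN)).1
    rw [Real.log_mul hr.ne' hNp.ne'] at this
    linarith
  have t3 := one s0 hs0 h0
  have t4 : ∑ i, (s i * N * Real.log (s i) - Real.log (Real.Gamma (s i * N + 1))) ≤
      ∑ i, ((D - Real.log (s i) / 2) - 1/2 * Real.log N - s i * (N * Real.log N - N)) :=
    Finset.sum_le_sum fun i _ => one (s i) (hs i) (hi i)
  rw [Finset.sum_sub_distrib, Finset.sum_sub_distrib, Finset.sum_sub_distrib,
    ← Finset.sum_mul (s := Finset.univ) (f := s)] at t4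
  simp only [Finset.sum_const, Finset.card_univ, Fintype.card_fin, nsmul_eq_mul] at t4
  have : ∑ i, s i = 1 - s0 := by linarith
  rw [this] at t4
  linarith

lemma aux_kappa_bound (d : ℕ) (s : Fin d → ℝ) (hs : s ∈ SdInt d) :
    ∃ C > 0, ∃ b0 > 0, ∀ b : ℝ, 0 < b → b ≤ b0 → ∀ x ∈ Sd d, 0 ≤ kappa d s b x ∧
      kappa d s b x ≤ C * b ^ (-(d : ℝ) / 2) * ∏ i, Real.exp (-(1 / (4 * b)) * (x i - s i) ^ 2) := by
  obtain ⟨hs1, hs2⟩ := hs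
  have hsum : ∑ i, |s i| = ∑ i, s i := Finset.sum_congr rfl fun i _ => abs_of_pos (hs1 i).1
  rw [hsum] at hs2
  obtain ⟨s0, hs0⟩ : ∃ s0, s0 = 1 - ∑ i, s i := ⟨_, rfl⟩
  have hs0p : 0 < s0 := by linarith
  have hsnn : 0 ≤ ∑ i, s i := Finset.sum_nonneg fun i _ => (hs1 i).1.le
  obtain ⟨C, hC⟩ := aux_const d s (fun i => (hs1 i).1) s0 hs0p (by linarith)
  have hb0 : ∃ b0 > 0, b0 ≤ s0 ∧ ∀ i, b0 ≤ s i := by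
    have : ∃ b0 > 0, ∀ i, b0 ≤ s i := by
      rcases isEmpty_or_nonempty (Fin d) with h | h
      · exact ⟨1, one_pos, fun i => (h.false i).elim⟩
      · obtain ⟨i, hi⟩ := Finite.exists_min s
        exact ⟨s i, (hs1 i).1, hi⟩
    obtain ⟨b1, h1, h2⟩ := this
    exact ⟨min s0 b1, lt_min hs0p h1, min_le_left _ _, fun i => (min_le_right _ _).trans (h2 i)⟩
  obtain ⟨b0, hb0p, hb00, hb0i⟩ := hb0
  refine ⟨Real.exp C, Real.exp_pos _, b0, hb0p, ?_⟩
  intro b hb hbb x hx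
  obtain ⟨hx1, hx2⟩ := hx
  have hxs : ∑ i, |x i| = ∑ i, x i := Finset.sum_congr rfl fun i _ => abs_of_nonneg (hx1 i).1
  rw [hxs] at hx2
  have hxnn : 0 ≤ ∑ i, x i := Finset.sum_nonneg fun i _ => (hx1 i).1
  unfold kappa dirK
  simp only [add_sub_cancel_right, ← hs0]
  have hG0 : 0 < Real.Gamma (s0 / b + 1) := Real.Gamma_pos_of_pos (by positivity)
  have hGi : ∀ i, 0 < Real.Gamma (s i / b + 1) := fun i =>
    Real.Gamma_pos_of_pos (by have := (hs1 i).1; positivity)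
  have hGp : 0 < ∏ i, Real.Gamma (s i / b + 1) := Finset.prod_pos fun i _ => hGi i
  have harg : ∑ i, (s i / b + 1) + (s0 / b + 1) = 1 / b + d + 1 := by
    rw [Finset.sum_add_distrib, ← Finset.sum_div]
    simp only [Finset.sum_const, Finset.card_univ, Fintype.card_fin, nsmul_eq_mul]
    rw [hs0]; field_simp; ring
  rw [harg]
  have hGN : 0 < Real.Gamma (1 / b + d + 1) := Real.Gamma_pos_of_pos (by positivity)
  have hxp : 0 ≤ ∏ i, x i ^ (s i / b) := Finset.prod_nonneg fun i _ => Real.rpow_nonneg (hx1 i).1 _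
  have hx0p : 0 ≤ (1 - ∑ i, x i) ^ (s0 / b) := Real.rpow_nonneg (by linarith) _
  refine ⟨by positivity, ?_⟩
  have hx0b := aux_pt hb (x := 1 - ∑ i, x i) (s := s0) (by linarith) (by linarith) hs0p (by linarith)
  have hxb : ∏ i, x i ^ (s i / b) ≤
      ∏ i, Real.exp ((s i * Real.log (s i) + (x i - s i) - (x i - s i) ^ 2 / 4) / b) :=
    Finset.prod_le_prod (fun i _ => Real.rpow_nonneg (hx1 i).1 _)
      (fun i _ => aux_pt hb (hx1 i).1 (hx1 i).2 (hs1 i).1 (hs1 i).2.le)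
  have hCb := hC (1 / b) (by rw [le_div_iff₀ hb]; linarith)
    (by rw [mul_one_div, le_div_iff₀ hb]; linarith)
    (fun i => by rw [mul_one_div, le_div_iff₀ hb]; linarith [hb0i i])
  simp only [mul_one_div] at hCb
  calc _ ≤ Real.Gamma (1 / b + d + 1) / (Real.Gamma (s0 / b + 1) * ∏ i, Real.Gamma (s i / b + 1)) *
      Real.exp ((s0 * Real.log s0 + ((1 - ∑ i, x i) - s0) - ((1 - ∑ i, x i) - s0) ^ 2 / 4) / b) *
      ∏ i, Real.exp ((s i * Real.log (s i) + (x i - s i) - (x i - s i) ^ 2 / 4) / b) := by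
        gcongr
    _ ≤ _ := by
      have hG : Real.Gamma (1 / b + d + 1) / (Real.Gamma (s0 / b + 1) * ∏ i, Real.Gamma (s i / b + 1))
        = Real.exp (Real.log (Real.Gamma (1 / b + d + 1)) - Real.log (Real.Gamma (s0 / b + 1))
          - ∑ i, Real.log (Real.Gamma (s i / b + 1))) := by
        rw [Real.exp_sub, Real.exp_sub, Real.exp_log hGN, Real.exp_log hG0, Real.exp_sum,
          div_div]
        congr 2
        exact Finset.prod_congr rfl fun i _ => (Real.exp_log (hGi i)).symm
      rw [hG, ← Real.exp_sum, ← Real.exp_sum, Real.rpow_def_of_pos hb, ← Real.exp_add, ← Real.exp_add,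
        ← Real.exp_add, ← Real.exp_add]
      apply Real.exp_le_exp.2
      have hsplit : ∑ i, (s i * Real.log (s i) + (x i - s i) - (x i - s i) ^ 2 / 4) / b =
          ∑ i, s i / b * Real.log (s i) + (∑ i, x i - ∑ i, s i) / b +
          ∑ i, -(1 / (4 * b)) * (x i - s i) ^ 2 := by
        rw [← Finset.sum_sub_distrib, Finset.sum_div, ← Finset.sum_add_distrib, ← Finset.sum_add_distrib]
        refine Finset.sum_congr rfl fun i _ => ?_
        field_simp
        ring
      rw [hsplit]
      have h0 : (s0 * Real.log s0 + ((1 - ∑ i, x i) - s0) - ((1 - ∑ i, x i) - s0) ^ 2 / 4) / b ≤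
          s0 / b * Real.log s0 - (∑ i, x i - ∑ i, s i) / b := by
        rw [div_mul_eq_mul_div, ← sub_div]
        apply div_le_div_of_nonneg_right _ hb.le
        nlinarith [sq_nonneg ((1 - ∑ i, x i) - s0)]
      have hlog : Real.log (1 / b) = - Real.log b := by rw [one_div, Real.log_inv]
      rw [hlog] at hCb
      linarith

lemma aux_max {α : Type*} [MeasurableSpace α] (ν : Measure α) [SigmaFinite ν]
    (F g : α → ENNReal) (hint : ∀ s, ∫⁻ a in s, F a ∂ν = ∫⁻ a in s, g a ∂ν)
    (m : α → ENNReal) (hm : Measurable m) (hle : m ≤ᵐ[ν] F) : m ≤ᵐ[ν] g := by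
  apply ae_le_of_forall_setLIntegral_le_of_sigmaFinite hm
  intro s _ _
  rw [← hint s]
  exact lintegral_mono_ae (ae_restrict_of_ae hle)

lemma aux_prod {α : Type*} [MeasurableSpace α] (ν : Measure α) [SigmaFinite ν]
    (F g : α → ENNReal) (hF : ∀ x, F x ≠ ⊤) (hg : Measurable g) (hgF : g ≤ F)
    (hint : ∀ s, ∫⁻ a in s, F a ∂ν = ∫⁻ a in s, g a ∂ν)
    (m : α × α → ENNReal) (hm : Measurable m)
    (hle : ∀ᵐ z ∂(ν.prod ν), m z ≤ F z.1 * F z.2) :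
    ∀ᵐ z ∂(ν.prod ν), m z ≤ g z.1 * g z.2 := by
  have h1 : ∀ᵐ x ∂ν, ∀ᵐ y ∂ν, m (x, y) ≤ F x * g y := by
    filter_upwards [Measure.ae_ae_of_ae_prod hle] with x hx
    by_cases h0 : F x = 0
    · filter_upwards [hx] with y hy
      simpa [h0] using hy
    · have : (fun y => m (x, y) / F x) ≤ᵐ[ν] g := by
        apply aux_max ν F g hint _ (by fun_prop)
        filter_upwards [hx] with y hy
        exact ENNReal.div_le_of_le_mul' hy
      filter_upwards [this] with y hy
      rw [mul_comm]
      exact (ENNReal.div_le_iff h0 (hF x)).1 hy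
  let c : ℚ → ENNReal := fun r => ((Real.toNNReal (r : ℝ) : NNReal) : ENNReal)
  have hset : ∀ r : ℚ, MeasurableSet {z : α × α | c r * g z.2 < m z} := fun r =>
    measurableSet_lt (by fun_prop) hm
  let A : ℚ → Set α := fun r => {x | 0 < ν (Prod.mk x ⁻¹' {z : α × α | c r * g z.2 < m z})}
  have hA : ∀ r, MeasurableSet (A r) := fun r =>
    measurableSet_lt measurable_const (measurable_measure_prodMk_left (hset r))
  have h2 : ∀ r, ∀ᵐ x ∂ν, x ∈ A r → c r ≤ g x := by
    intro r
    have : (A r).indicator (fun _ => c r) ≤ᵐ[ν] g := by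
      apply aux_max ν F g hint _ (measurable_const.indicator (hA r))
      filter_upwards [h1] with x hx
      by_cases hxA : x ∈ A r
      · rw [Set.indicator_of_mem hxA]
        by_contra hcon
        push Not at hcon
        have hz : ν (Prod.mk x ⁻¹' {z : α × α | c r * g z.2 < m z}) = 0 := by
          refine measure_mono_null ?_ hx
          intro y hy
          simp only [Set.mem_preimage, Set.mem_ofPred_eq] at hy
          simp only [Set.mem_compl_iff, Set.mem_ofPred_eq, not_le]
          exact lt_of_le_of_lt (by gcongr) hy
        exact absurd hz (ne_of_gt hxA)
      · rw [Set.indicator_of_notMem hxA]; exact zero_le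
    filter_upwards [this] with x hx hxA
    rwa [Set.indicator_of_mem hxA] at hx
  rw [Measure.ae_prod_iff_ae_ae (measurableSet_le hm (by fun_prop))]
  filter_upwards [ae_all_iff.2 h2] with x hx
  have h3 : ∀ r : ℚ, ∀ᵐ y ∂ν, g x < c r → m (x, y) ≤ c r * g y := by
    intro r
    by_cases hr : g x < c r
    · have : x ∉ A r := fun h => absurd (hx r h) (not_le.2 hr)
      have h0 : ν (Prod.mk x ⁻¹' {z : α × α | c r * g z.2 < m z}) = 0 := by
        simpa [A] using this
      have : ∀ᵐ y ∂ν, y ∉ Prod.mk x ⁻¹' {z : α × α | c r * g z.2 < m z} := measure_eq_zero_iff_ae_notMem.1 h0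
      filter_upwards [this] with y hy _
      simpa using hy
    · exact Filter.Eventually.of_forall fun y h => absurd h hr
  filter_upwards [ae_all_iff.2 h3] with y hy
  have hgt : ∀ x, g x ≠ ⊤ := fun x => ne_top_of_le_ne_top (hF x) (hgF x)
  by_contra hcon
  push Not at hcon
  by_cases hgy : g y = 0
  · obtain ⟨r, _, hr, _⟩ := ENNReal.lt_iff_exists_rat_btwn.1 (lt_top_iff_ne_top.2 (hgt x))
    have := hy r hr
    simp [hgy] at this
    simp [hgy, this] at hcon
  · have hlt : g x < m (x, y) / g y :=
      (ENNReal.lt_div_iff_mul_lt (Or.inl hgy) (Or.inl (hgt y))).2 hcon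
    obtain ⟨r, _, hr, hr2⟩ := ENNReal.lt_iff_exists_rat_btwn.1 hlt
    have h4 := hy r hr
    have h5 := (ENNReal.lt_div_iff_mul_lt (Or.inl hgy) (Or.inl (hgt y))).1 hr2
    exact absurd h4 (not_le.2 h5)

lemma aux_dens {α : Type*} [MeasurableSpace α] (ν : Measure α) [SigmaFinite ν]
    (S : Set α) (f : α → ℝ) (hsupp : ∀ x, x ∉ S → f x = 0)
    (fp : α × α → ℝ) (μ : Measure α) (hμ : μ = ν.withDensity (fun x => ENNReal.ofReal (f x)))
    (μ2 : Measure (α × α))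
    (hμ2 : μ2 = (ν.prod ν).withDensity (fun z => ENNReal.ofReal (fp z)))
    (h1 : μ2.map Prod.fst = μ) (h2 : μ2.map Prod.snd = μ)
    (H : α × α → ENNReal) (hH : Measurable H)
    (hHe : H =ᵐ[ν.prod ν] (S ×ˢ S).indicator (fun z => ENNReal.ofReal |fp z - f z.1 * f z.2|))
    (φ : α × α → ENNReal) (hφ : Measurable φ) :
    ∫⁻ z, φ z ∂μ2 ≤ ∫⁻ z, φ z ∂(μ.prod μ) + ∫⁻ z, φ z * H z ∂(ν.prod ν) ∧
    ∫⁻ z, φ z ∂(μ.prod μ) ≤ ∫⁻ z, φ z ∂μ2 + ∫⁻ z, φ z * H z ∂(ν.prod ν) := by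
  obtain ⟨g, hgm, hgF, hgint⟩ := exists_measurable_le_forall_setLIntegral_eq ν
    (fun x => ENNReal.ofReal (f x))
  obtain ⟨k, hkm, hkF, hkint⟩ := exists_measurable_le_forall_setLIntegral_eq (ν.prod ν)
    (fun z => ENNReal.ofReal (fp z))
  have hμg : μ = ν.withDensity g := by
    rw [hμ]; ext s hs; rw [withDensity_apply _ hs, withDensity_apply _ hs, hgint]
  have hμ2k : μ2 = (ν.prod ν).withDensity k := by
    rw [hμ2]; ext s hs; rw [withDensity_apply _ hs, withDensity_apply _ hs, hkint]
  have hμμ : μ.prod μ = (ν.prod ν).withDensity (fun z => g z.1 * g z.2) := by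
    rw [hμg, prod_withDensity hgm hgm]
  have hgpos : ∀ x, g x ≠ 0 → 0 < f x := by
    intro x hx
    have : 0 < ENNReal.ofReal (f x) := lt_of_lt_of_le (pos_iff_ne_zero.2 hx) (hgF x)
    exact ENNReal.ofReal_pos.1 this
  have hgS : ∀ x, g x ≠ 0 → x ∈ S := by
    intro x hx
    by_contra h
    exact absurd (hsupp x h) (hgpos x hx).ne'
  have hg0 : μ {x | g x = 0} = 0 := by
    have hms : MeasurableSet {x | g x = 0} := hgm (measurableSet_singleton 0)
    rw [hμg, withDensity_apply _ hms, setLIntegral_congr_fun hms (g := fun _ => 0) (fun x hx => hx)]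
    simp
  have hk0 : ∀ (pr : α × α → α), Measurable pr → μ2.map pr = μ →
      ∀ᵐ z ∂(ν.prod ν), g (pr z) = 0 → k z = 0 := by
    intro pr hpr hmap
    have hms : MeasurableSet {x | g x = 0} := hgm (measurableSet_singleton 0)
    have h : μ2 (pr ⁻¹' {x | g x = 0}) = 0 := by
      rw [← Measure.map_apply hpr hms, hmap, hg0]
    rw [hμ2k, withDensity_apply _ (hpr hms), lintegral_eq_zero_iff hkm] at h
    have := (ae_restrict_iff' (hpr hms)).1 h
    filter_upwards [this] with z hz hz0
    exact hz hz0
  have ka := hk0 _ measurable_fst h1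
  have kb := hk0 _ measurable_snd h2
  have clA : ∀ᵐ z ∂(ν.prod ν), k z - H z ≤ g z.1 * g z.2 := by
    apply aux_prod ν (fun x => ENNReal.ofReal (f x)) g (fun _ => ENNReal.ofReal_ne_top) hgm hgF hgint
      (m := fun z => k z - H z) (hkm.sub hH)
    filter_upwards [ka, kb, hHe] with z za zb hz
    by_cases hkz : k z = 0
    · simp [hkz]
    have ga : g z.1 ≠ 0 := fun h => hkz (za h)
    have gb : g z.2 ≠ 0 := fun h => hkz (zb h)
    have hzS : z ∈ S ×ˢ S := ⟨hgS _ ga, hgS _ gb⟩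
    rw [Set.indicator_of_mem hzS] at hz
    rw [hz, tsub_le_iff_right, ← ENNReal.ofReal_mul (hgpos _ ga).le,
      ← ENNReal.ofReal_add (mul_pos (hgpos _ ga) (hgpos _ gb)).le (abs_nonneg _)]
    refine (hkF z).trans (ENNReal.ofReal_le_ofReal ?_)
    linarith [le_abs_self (fp z - f z.1 * f z.2)]
  have clB : ∀ᵐ z ∂(ν.prod ν), g z.1 * g z.2 - H z ≤ k z := by
    apply aux_max (ν.prod ν) (fun z => ENNReal.ofReal (fp z)) k hkint
      (fun z => g z.1 * g z.2 - H z) (by fun_prop)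
    filter_upwards [hHe] with z hz
    by_cases hga : g z.1 = 0
    · simp [hga]
    by_cases hgb : g z.2 = 0
    · simp [hgb]
    have hzS : z ∈ S ×ˢ S := ⟨hgS _ hga, hgS _ hgb⟩
    rw [Set.indicator_of_mem hzS] at hz
    rw [hz, tsub_le_iff_right]
    calc g z.1 * g z.2 ≤ ENNReal.ofReal (f z.1) * ENNReal.ofReal (f z.2) :=
          mul_le_mul' (hgF z.1) (hgF z.2)
      _ = ENNReal.ofReal (f z.1 * f z.2) := (ENNReal.ofReal_mul (hgpos _ hga).le).symm
      _ ≤ ENNReal.ofReal (fp z + |fp z - f z.1 * f z.2|) := by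
          apply ENNReal.ofReal_le_ofReal
          linarith [neg_abs_le (fp z - f z.1 * f z.2)]
      _ ≤ _ := ENNReal.ofReal_add_le
  have e1 : ∫⁻ z, φ z ∂μ2 = ∫⁻ z, k z * φ z ∂(ν.prod ν) := by
    rw [hμ2k, lintegral_withDensity_eq_lintegral_mul _ hkm hφ]; rfl
  have e2 : ∫⁻ z, φ z ∂(μ.prod μ) = ∫⁻ z, g z.1 * g z.2 * φ z ∂(ν.prod ν) := by
    rw [hμμ, lintegral_withDensity_eq_lintegral_mul _ (by fun_prop) hφ]; rfl
  rw [e1, e2, ← lintegral_add_left (by fun_prop), ← lintegral_add_left (by fun_prop)]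
  constructor
  · apply lintegral_mono_ae
    filter_upwards [clA] with z hz
    rw [mul_comm (φ z), ← add_mul]
    gcongr
    exact tsub_le_iff_right.1 hz
  · apply lintegral_mono_ae
    filter_upwards [clB] with z hz
    rw [mul_comm (φ z), ← add_mul]
    gcongr
    exact tsub_le_iff_right.1 hz

lemma aux_Sd_meas (d : ℕ) : MeasurableSet (Sd d) := by
  have : Sd d = (⋂ i, {s : Fin d → ℝ | s i ∈ Set.Icc (0 : ℝ) 1}) ∩ {s | ∑ i, |s i| ≤ 1} := by
    ext s; simp [Sd]
  rw [this]
  refine MeasurableSet.inter (MeasurableSet.iInter fun i => ?_) ?_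
  · exact (measurable_pi_apply i) measurableSet_Icc
  · exact measurableSet_le (by fun_prop) measurable_const

lemma aux_kappa_meas (d : ℕ) (s : Fin d → ℝ) (b : ℝ) : Measurable (kappa d s b) := by
  unfold kappa dirK
  fun_prop

lemma aux_gauss (d : ℕ) (s : Fin d → ℝ) (c : ℝ) (hc : 0 < c) (M : ℝ) (hM : 0 ≤ M) :
    ∫⁻ x : Fin d → ℝ, ENNReal.ofReal (M * ∏ i, Real.exp (-c * (x i - s i) ^ 2)) =
      ENNReal.ofReal (M * √(π / c) ^ d) := by
  have hi : ∀ i, Integrable (fun t : ℝ => Real.exp (-c * (t - s i) ^ 2)) := fun i =>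
    (integrable_exp_neg_mul_sq hc).comp_sub_right (s i)
  have hint : Integrable (fun x : Fin d → ℝ => ∏ i, Real.exp (-c * (x i - s i) ^ 2)) :=
    Integrable.fintype_prod (f := fun i t => Real.exp (-c * (t - s i) ^ 2)) hi
  rw [← ofReal_integral_eq_lintegral_ofReal (hint.const_mul M)
    (Filter.Eventually.of_forall fun x => by positivity), integral_const_mul,
    integral_fintype_prod_volume_eq_prod (fun i t => Real.exp (-c * (t - s i) ^ 2))]
  congr 2
  have : ∀ i, ∫ t : ℝ, Real.exp (-c * (t - s i) ^ 2) = √(π / c) := by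
    intro i
    rw [integral_sub_right_eq_self (fun t : ℝ => Real.exp (-c * t ^ 2)) (s i), integral_gaussian]
  simp only [this, Finset.prod_const, Finset.card_univ, Fintype.card_fin]

lemma aux_Kint (d : ℕ) (s : Fin d → ℝ) (hs : s ∈ SdInt d) (q : ℝ) (hq : 1 < q) :
    ∃ C ≥ 0, ∃ b0 > 0, ∀ b : ℝ, 0 < b → b ≤ b0 → (∀ x ∈ Sd d, 0 ≤ kappa d s b x) ∧
      (∃ M : ℝ, ∀ x ∈ Sd d, kappa d s b x ≤ M) ∧
      ∫⁻ x, ((Sd d).indicator (fun x => ENNReal.ofReal (kappa d s b x)) x) ^ q ≤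
        ENNReal.ofReal (C * b ^ (-(d : ℝ) / 2 * q + d / 2)) := by
  obtain ⟨C, hC, b0, hb0, h⟩ := aux_kappa_bound d s hs
  refine ⟨C ^ q * √(4 * π / q) ^ d, by positivity, b0, hb0, fun b hb hbb => ⟨fun x hx => (h b hb hbb x hx).1,
    ⟨C * b ^ (-(d : ℝ) / 2), fun x hx => ?_⟩, ?_⟩⟩
  · refine (h b hb hbb x hx).2.trans ?_
    apply mul_le_of_le_one_right (by positivity)
    apply Finset.prod_le_one
    · intros; positivity
    · intro i _
      rw [Real.exp_le_one_iff]
      have : 0 ≤ (1 / (4 * b)) * (x i - s i) ^ 2 := by positivity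
      linarith
  · have hq0 : 0 < q := by linarith
    have hfin : ENNReal.ofReal ((C * b ^ (-(d : ℝ) / 2)) ^ q * √(π / (q / (4 * b))) ^ d) =
        ENNReal.ofReal (C ^ q * √(4 * π / q) ^ d * b ^ (-(d : ℝ) / 2 * q + d / 2)) := by
      congr 1
      rw [Real.mul_rpow hC.le (by positivity), ← Real.rpow_mul hb.le, Real.rpow_add hb]
      have : π / (q / (4 * b)) = (4 * π / q) * b := by field_simp
      rw [this, Real.sqrt_mul (by positivity), mul_pow]
      have : √b ^ d = b ^ ((d : ℝ) / 2) := by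
        rw [Real.sqrt_eq_rpow, ← Real.rpow_natCast, ← Real.rpow_mul hb.le]
        congr 1; ring
      rw [this]; ring
    rw [← hfin, ← aux_gauss d s (q / (4 * b)) (by positivity) _ (by positivity)]
    apply lintegral_mono
    intro x
    by_cases hx : x ∈ Sd d
    · simp only [Set.indicator_of_mem hx]
      obtain ⟨k0, k1⟩ := h b hb hbb x hx
      rw [ENNReal.ofReal_rpow_of_nonneg k0 hq0.le]
      apply ENNReal.ofReal_le_ofReal
      refine (Real.rpow_le_rpow k0 k1 hq0.le).trans (le_of_eq ?_)
      rw [Real.mul_rpow (by positivity) (by positivity)]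
      congr 1
      rw [← Real.finsetProd_rpow _ _ (fun i _ => by positivity)]
      refine Finset.prod_congr rfl fun i _ => ?_
      rw [← Real.exp_mul]
      congr 1
      field_simp
    · simp only [Set.indicator_of_notMem hx, ENNReal.zero_rpow_of_pos hq0]
      exact zero_le

lemma aux_cov_bound {Ω : Type*} [MeasurableSpace Ω]
    (P : Measure Ω) [IsProbabilityMeasure P] (d : ℕ)
    (Y Z : Ω → (Fin d → ℝ)) (hY : Measurable Y) (hZ : Measurable Z)
    (hYv : ∀ ω, Y ω ∈ Sd d) (hZv : ∀ ω, Z ω ∈ Sd d)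
    (f : (Fin d → ℝ) → ℝ)
    (hYl : Measure.map Y P = volume.withDensity fun x => ENNReal.ofReal (f x))
    (hZl : Measure.map Z P = volume.withDensity fun x => ENNReal.ofReal (f x))
    (hsupp : ∀ x, x ∉ Sd d → f x = 0)
    (fp : (Fin d → ℝ) × (Fin d → ℝ) → ℝ)
    (hYZ : Measure.map (fun ω => (Y ω, Z ω)) P = volume.withDensity fun z => ENNReal.ofReal (fp z))
    (p q : ℝ) (hpq : p.HolderConjugate q)
    (hint : Integrable (fun z => |fp z - f z.1 * f z.2| ^ p) (volume.restrict (Sd d ×ˢ Sd d)))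
    (D : ℝ) (hD : (∫ z in Sd d ×ˢ Sd d, |fp z - f z.1 * f z.2| ^ p) ^ (1 / p) ≤ D)
    (κ : (Fin d → ℝ) → ℝ) (hκm : Measurable κ) (hκ0 : ∀ x ∈ Sd d, 0 ≤ κ x)
    (M : ℝ) (hκM : ∀ x ∈ Sd d, κ x ≤ M) (E : ℝ) (hE0 : 0 ≤ E)
    (hE : ∫⁻ x, ((Sd d).indicator (fun x => ENNReal.ofReal (κ x)) x) ^ q ≤ ENNReal.ofReal E) :
    |cov P (fun ω => κ (Y ω)) (fun ω => κ (Z ω))| ≤ (E * E) ^ (1 / q) * D := by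
  have hp0 : 0 < p := hpq.pos
  have hq0 : 0 < q := hpq.symm.pos
  have hSm := aux_Sd_meas d
  set K : (Fin d → ℝ) → ENNReal := (Sd d).indicator (fun x => ENNReal.ofReal (κ x)) with hK
  have hKm : Measurable K := (hκm.ennreal_ofReal).indicator hSm
  have hKM : ∀ x, K x ≤ ENNReal.ofReal M := by
    intro x
    by_cases hx : x ∈ Sd d
    · rw [hK, Set.indicator_of_mem hx]; exact ENNReal.ofReal_le_ofReal (hκM x hx)
    · rw [hK, Set.indicator_of_notMem hx]; exact zero_le
  -- the function H
  have hHae : AEMeasurable ((Sd d ×ˢ Sd d).indicator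
      (fun z => ENNReal.ofReal |fp z - f z.1 * f z.2|)) (volume : Measure ((Fin d → ℝ) × (Fin d → ℝ))) := by
    rw [aemeasurable_indicator_iff (hSm.prod hSm)]
    apply AEMeasurable.ennreal_ofReal
    have := (hint.aestronglyMeasurable.aemeasurable).pow_const (1 / p)
    refine this.congr (Filter.Eventually.of_forall fun z => ?_)
    simp only
    rw [← Real.rpow_mul (abs_nonneg _), mul_one_div_cancel hp0.ne', Real.rpow_one]
  obtain ⟨H, hHm, hHe⟩ := hHae
  have hdens := aux_dens (volume : Measure (Fin d → ℝ)) (Sd d) f hsupp fp (Measure.map Y P) hYl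
    (Measure.map (fun ω => (Y ω, Z ω)) P) hYZ
    (by rw [Measure.map_map measurable_fst (hY.prodMk hZ)]; rfl)
    (by rw [Measure.map_map measurable_snd (hY.prodMk hZ), hYl, ← hZl]; rfl)
    H hHm hHe.symm (fun z => K z.1 * K z.2) (by fun_prop)
  have hKY : ∀ ω, ENNReal.ofReal (κ (Y ω)) = K (Y ω) := fun ω => by
    rw [hK, Set.indicator_of_mem (hYv ω)]
  have hKZ : ∀ ω, ENNReal.ofReal (κ (Z ω)) = K (Z ω) := fun ω => by
    rw [hK, Set.indicator_of_mem (hZv ω)]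
  have e1 : ∫ ω, κ (Y ω) * κ (Z ω) ∂P =
      (∫⁻ z, K z.1 * K z.2 ∂(Measure.map (fun ω => (Y ω, Z ω)) P)).toReal := by
    rw [lintegral_map (by fun_prop) (hY.prodMk hZ), integral_eq_lintegral_of_nonneg_ae
      (Filter.Eventually.of_forall fun ω => mul_nonneg (hκ0 _ (hYv ω)) (hκ0 _ (hZv ω)))
      ((hκm.comp hY).mul (hκm.comp hZ)).aestronglyMeasurable]
    congr 1
    refine lintegral_congr fun ω => ?_
    rw [ENNReal.ofReal_mul (hκ0 _ (hYv ω)), hKY, hKZ]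
  have eY : ∫ ω, κ (Y ω) ∂P = (∫⁻ x, K x ∂(Measure.map Y P)).toReal := by
    rw [lintegral_map hKm hY, integral_eq_lintegral_of_nonneg_ae
      (Filter.Eventually.of_forall fun ω => hκ0 _ (hYv ω)) (hκm.comp hY).aestronglyMeasurable]
    simp only [hKY]
  have eZ : ∫ ω, κ (Z ω) ∂P = (∫⁻ x, K x ∂(Measure.map Y P)).toReal := by
    rw [hYl, ← hZl, lintegral_map hKm hZ, integral_eq_lintegral_of_nonneg_ae
      (Filter.Eventually.of_forall fun ω => hκ0 _ (hZv ω)) (hκm.comp hZ).aestronglyMeasurable]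
    simp only [hKZ]
  have : IsProbabilityMeasure (Measure.map Y P) := Measure.isProbabilityMeasure_map hY.aemeasurable
  have : IsProbabilityMeasure (Measure.map (fun ω => (Y ω, Z ω)) P) :=
    Measure.isProbabilityMeasure_map (hY.prodMk hZ).aemeasurable
  have e2 : (∫ ω, κ (Y ω) ∂P) * (∫ ω, κ (Z ω) ∂P) =
      (∫⁻ z, K z.1 * K z.2 ∂((Measure.map Y P).prod (Measure.map Y P))).toReal := by
    rw [lintegral_prod_mul hKm.aemeasurable hKm.aemeasurable, ENNReal.toReal_mul, eY, eZ]
  have bd : ∀ (ρ : Measure ((Fin d → ℝ) × (Fin d → ℝ))), IsProbabilityMeasure ρ →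
      ∫⁻ z, K z.1 * K z.2 ∂ρ ≠ ⊤ := by
    intro ρ hρ
    refine ne_top_of_le_ne_top ?_ (lintegral_mono (g := fun _ => ENNReal.ofReal M * ENNReal.ofReal M)
      fun z => mul_le_mul' (hKM z.1) (hKM z.2))
    rw [lintegral_const, measure_univ, mul_one]
    exact ENNReal.mul_ne_top ENNReal.ofReal_ne_top ENNReal.ofReal_ne_top
  have he : ∫⁻ z, K z.1 * K z.2 * H z ∂(volume.prod volume) ≤
      ENNReal.ofReal ((E * E) ^ (1 / q) * D) := by
    have hh := ENNReal.lintegral_mul_le_Lp_mul_Lq (volume.prod volume) hpq.symm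
      (f := fun z : (Fin d → ℝ) × (Fin d → ℝ) => K z.1 * K z.2) (g := H) (by fun_prop) hHm.aemeasurable
    refine hh.trans ?_
    rw [ENNReal.ofReal_mul (by positivity)]
    apply mul_le_mul'
    · rw [← ENNReal.ofReal_rpow_of_nonneg (by positivity) (by positivity)]
      apply ENNReal.rpow_le_rpow _ (by positivity)
      simp only [ENNReal.mul_rpow_of_nonneg _ _ hq0.le]
      rw [lintegral_prod_mul (f := fun x => K x ^ q) (g := fun x => K x ^ q)
        (by fun_prop) (by fun_prop), ENNReal.ofReal_mul hE0]
      exact mul_le_mul' hE hE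
    · have hHp : ∫⁻ z, H z ^ p ∂(volume.prod volume) =
          ENNReal.ofReal (∫ z in Sd d ×ˢ Sd d, |fp z - f z.1 * f z.2| ^ p) := by
        rw [ofReal_integral_eq_lintegral_ofReal hint
          (Filter.Eventually.of_forall fun z => by positivity),
          ← lintegral_indicator (hSm.prod hSm)]
        apply lintegral_congr_ae
        filter_upwards [hHe] with z hz
        rw [← hz]
        by_cases hzS : z ∈ Sd d ×ˢ Sd d
        · rw [Set.indicator_of_mem hzS, Set.indicator_of_mem hzS,
            ENNReal.ofReal_rpow_of_nonneg (abs_nonneg _) hp0.le]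
        · rw [Set.indicator_of_notMem hzS, Set.indicator_of_notMem hzS, ENNReal.zero_rpow_of_pos hp0]
      rw [hHp, ENNReal.ofReal_rpow_of_nonneg (integral_nonneg fun z => by positivity) (by positivity)]
      exact ENNReal.ofReal_le_ofReal hD
  have hD0 : 0 ≤ D := le_trans (Real.rpow_nonneg (integral_nonneg fun z => by positivity) _) hD
  unfold cov
  rw [e2, e1]
  have b1 := bd _ ‹IsProbabilityMeasure (Measure.map (fun ω => (Y ω, Z ω)) P)›
  have b2 := bd ((Measure.map Y P).prod (Measure.map Y P)) inferInstance
  have het := ne_top_of_le_ne_top ENNReal.ofReal_ne_top he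
  have heR := ENNReal.toReal_mono ENNReal.ofReal_ne_top he
  rw [ENNReal.toReal_ofReal (by positivity)] at heR
  have r1 := ENNReal.toReal_mono (ENNReal.add_ne_top.2 ⟨b2, het⟩) hdens.1
  have r2 := ENNReal.toReal_mono (ENNReal.add_ne_top.2 ⟨b1, het⟩) hdens.2
  rw [ENNReal.toReal_add b2 het] at r1
  rw [ENNReal.toReal_add b1 het] at r2
  rw [abs_le]
  constructor <;> linarith

lemma aux_count (n i B : ℕ) (hB : 1 ≤ B) :
    (((Finset.Icc 1 n).filter (fun j => 1 ≤ Nat.dist i j ∧ Nat.dist i j ≤ B)).card : ℝ) ≤ 3 * B := by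
  have : ((Finset.Icc 1 n).filter (fun j => 1 ≤ Nat.dist i j ∧ Nat.dist i j ≤ B)) ⊆
      Finset.Icc (i - B) (i + B) := by
    intro j hj
    have hj2 := (Finset.mem_filter.1 hj).2
    simp only [Finset.mem_Icc, Nat.dist] at hj2 ⊢
    omega
  have h := Finset.card_le_card this
  rw [Nat.card_Icc] at h
  have : ((Finset.Icc 1 n).filter (fun j => 1 ≤ Nat.dist i j ∧ Nat.dist i j ≤ B)).card ≤ 3 * B := by
    omega
  exact_mod_cast this


/-- Near-diagonal covariance sum bound `|C_{1,n}| ≪_s n β_n b^{-d/p}`. -/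
theorem near_diagonal_cov_sum_bound {Ω : Type*} [MeasurableSpace Ω]
    (P : Measure Ω) [IsProbabilityMeasure P] (d : ℕ) (hd : 1 ≤ d)
    (X : ℕ → Ω → (Fin d → ℝ)) (hmeas : ∀ i, Measurable (X i))
    (hval : ∀ i ω, X i ω ∈ Sd d)
    (hstat : IsStrictlyStationary P X)
    (f : (Fin d → ℝ) → ℝ)
    (hlaw : ∀ i : ℕ, 1 ≤ i →
      Measure.map (X i) P = volume.withDensity fun x => ENNReal.ofReal (f x))
    (hsupp : ∀ x, x ∉ Sd d → f x = 0)
    (p q : ℝ) (hp : 2 < p) (hq1 : 1 < q) (hq2 : q < 2) (hpq : 1 / p + 1 / q = 1)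
    (hA2 : AssumpA2 P X f p)
    (s : Fin d → ℝ) (hs : s ∈ SdInt d)
    (b : ℕ → ℝ) (hbpos : ∀ n, 0 < b n) (hb0 : Tendsto b atTop (𝓝 0))
    (β : ℕ → ℕ) (hβ : ∀ n : ℕ, 2 ≤ n → 1 ≤ β n ∧ β n ≤ n - 1) :
    (fun n : ℕ => ∑ i ∈ Finset.Icc 1 n, ∑ j ∈ Finset.Icc 1 n,
        if 1 ≤ Nat.dist i j ∧ Nat.dist i j ≤ β n then
          cov P (fun ω => kappa d s (b n) (X i ω)) (fun ω => kappa d s (b n) (X j ω))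
        else 0)
      =O[atTop] (fun n : ℕ => (n : ℝ) * (β n : ℝ) * (b n) ^ (-(d : ℝ) / p)) := by
  have hp0 : 0 < p := by linarith
  have hq0 : 0 < q := by linarith
  have hH : p.HolderConjugate q := by
    rw [Real.holderConjugate_iff]
    exact ⟨by linarith, by simpa [one_div] using hpq⟩
  obtain ⟨fp, hfp1, hfp2, D, hD⟩ := hA2
  obtain ⟨C, hC, b0, hb0p, hK⟩ := aux_Kint d s hs q hq1
  have hev : ∀ᶠ n in atTop, b n ≤ b0 := hb0.eventually_le_const hb0p
  have hD0 : 0 ≤ D := by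
    refine le_trans (Real.rpow_nonneg (integral_nonneg fun z => ?_) _)
      (hD 1 2 le_rfl (by norm_num) (by norm_num))
    positivity
  refine IsBigO.of_bound (3 * ((C * C) ^ (1 / q) * D)) ?_
  filter_upwards [hev, Filter.eventually_ge_atTop 2] with n hn hn2
  have hbn := hbpos n
  obtain ⟨k0, ⟨M, hM⟩, hint⟩ := hK (b n) hbn hn
  set T : ℝ := (C * C) ^ (1 / q) * D * (b n) ^ (-(d : ℝ) / p) with hT
  have hT0 : 0 ≤ T := by positivity
  have hcov : ∀ i j : ℕ, 1 ≤ i → 1 ≤ j → i ≠ j →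
      |cov P (fun ω => kappa d s (b n) (X i ω)) (fun ω => kappa d s (b n) (X j ω))| ≤ T := by
    intro i j hi hj hij
    have := aux_cov_bound P d (X i) (X j) (hmeas i) (hmeas j) (hval i) (hval j) f (hlaw i hi)
      (hlaw j hj) hsupp (fp i j) (hfp1 i j hi hj hij) p q hH (hfp2 i j hi hj hij) D
      (hD i j hi hj hij) (kappa d s (b n)) (aux_kappa_meas d s (b n)) k0 M hM _ (by positivity) hint
    refine this.trans (le_of_eq ?_)
    have e : ∀ r : ℝ, C * b n ^ r * (C * b n ^ r) = C * C * b n ^ (r + r) := by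
      intro r; rw [Real.rpow_add hbn]; ring
    rw [e, Real.mul_rpow (by positivity) (by positivity), ← Real.rpow_mul hbn.le, hT]
    have e2 : ((-(d : ℝ) / 2 * q + d / 2) + (-(d : ℝ) / 2 * q + d / 2)) * (1 / q) = -(d : ℝ) / p := by
      have : 1 / p = 1 - 1 / q := by linarith
      rw [div_eq_mul_one_div (-(d : ℝ)) p, this]
      field_simp
      ring
    rw [e2]; ring
  have hrow : ∀ i ∈ Finset.Icc 1 n, |∑ j ∈ Finset.Icc 1 n,
        if 1 ≤ Nat.dist i j ∧ Nat.dist i j ≤ β n then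
          cov P (fun ω => kappa d s (b n) (X i ω)) (fun ω => kappa d s (b n) (X j ω))
        else 0| ≤ 3 * (β n : ℝ) * T := by
    intro i hi
    rw [← Finset.sum_filter]
    refine (Finset.abs_sum_le_sum_abs _ _).trans ?_
    refine (Finset.sum_le_card_nsmul _ _ T ?_).trans ?_
    · intro j hj
      rw [Finset.mem_filter] at hj
      refine hcov i j (Finset.mem_Icc.1 hi).1 (Finset.mem_Icc.1 hj.1).1 ?_
      rintro rfl
      have := hj.2.1
      simp [Nat.dist_self] at this
    · rw [nsmul_eq_mul]
      exact mul_le_mul_of_nonneg_right (aux_count n i (β n) (hβ n hn2).1) hT0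
  rw [Real.norm_eq_abs, Real.norm_eq_abs]
  refine (Finset.abs_sum_le_sum_abs _ _).trans ((Finset.sum_le_card_nsmul _ _ _ hrow).trans ?_)
  rw [Nat.card_Icc, nsmul_eq_mul, abs_of_nonneg (by positivity), hT, Nat.add_sub_cancel]
  apply le_of_eq
  ring
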